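/- For every ribbon a with n nodes there exists an extension of a having at most n/2 + 1 critical points in the open unit disk; that is, γ(a) ≤ n/2 + 1. -/

import Mathlib

open scoped RealInnerProductSpace

noncomputable section

abbrev E2 : Type := EuclideanSpace ℝ (Fin 2)

/-- The point (cos t, sin t) on the unit circle in ℝ². -/
def sphPt (t : ℝ) : E2 := (EuclideanSpace.equiv (Fin 2) ℝ).symm ![Real.cos t, Real.sin t]

/-- A ribbon with `n` nodes, encoded via the angle parametrization `g = φ ∘ (cos, sin)`
of a C^∞ function `φ : S¹ → ℝ` whose critical points on the circle are exactly the `n`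
nondegenerate local extrema (nodes) at angles `θ 0 < θ 1 < ⋯ < θ (n-1)` in `[0, 2π)`,
with pairwise distinct critical values, together with a marking `ν` of the nodes by `±1`. -/
structure Ribbon (n : ℕ) : Type where
  g : ℝ → ℝ
  θ : Fin n → ℝ
  ν : Fin n → ℤ
  n_even : Even n
  n_pos : 0 < n
  smooth_g : ContDiff ℝ (⊤ : ℕ∞) g
  periodic_g : Function.Periodic g (2 * Real.pi)
  theta_mem : ∀ i, θ i ∈ Set.Ico (0 : ℝ) (2 * Real.pi)
  theta_mono : StrictMono θ
  node_crit : ∀ i, deriv g (θ i) = 0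
  node_nondeg : ∀ i, deriv (deriv g) (θ i) ≠ 0
  crit_only : ∀ t ∈ Set.Ico (0 : ℝ) (2 * Real.pi), deriv g t = 0 → ∃ i, t = θ i
  values_distinct : ∀ i j, g (θ i) = g (θ j) → i = j
  nu_sign : ∀ i, ν i = 1 ∨ ν i = -1

/-- The signature σ = s₊ − s₋ of a ribbon. -/
def Ribbon.sigma {n : ℕ} (a : Ribbon n) : ℤ := ∑ i, a.ν i

/-- Critical points of `f` in the open unit disk. -/
def critPts (f : E2 → ℝ) : Set E2 :=
  {x | x ∈ Metric.ball (0 : E2) 1 ∧ fderiv ℝ f x = 0}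

/-- `f : ℝ² → ℝ` is an extension of the ribbon `a`: it is C^∞, agrees with `φ` on the unit
circle, has nowhere-vanishing gradient on the circle, and at each node the radial derivative
`⟪∇f(p), p⟫` has sign `ν p` if `p` is a local maximum of `φ` (second derivative of `g`
negative there) and sign `−ν p` if `p` is a local minimum of `φ`. -/
def IsExtension {n : ℕ} (a : Ribbon n) (f : E2 → ℝ) : Prop :=
  ContDiff ℝ (⊤ : ℕ∞) f ∧
  (∀ t : ℝ, f (sphPt t) = a.g t) ∧
  (∀ x ∈ Metric.sphere (0 : E2) 1, fderiv ℝ f x ≠ 0) ∧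
  (∀ i : Fin n,
    (deriv (deriv a.g) (a.θ i) < 0 →
      0 < (a.ν i : ℝ) * ⟪gradient f (sphPt (a.θ i)), sphPt (a.θ i)⟫) ∧
    (0 < deriv (deriv a.g) (a.θ i) →
      (a.ν i : ℝ) * ⟪gradient f (sphPt (a.θ i)), sphPt (a.θ i)⟫ < 0))

/-- The ribbon invariant γ: the infimum, over all extensions `f` of `a`, of the number of
critical points of `f` in the open unit disk (a value in `ℕ∞`). -/
def gammaR {n : ℕ} (a : Ribbon n) : ℕ∞ :=
  sInf {k : ℕ∞ | ∃ f : E2 → ℝ, IsExtension a f ∧ (critPts f).encard = k}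


def cplx (x : E2) : ℂ := (x 0 : ℂ) + (x 1 : ℂ) * Complex.I

def ang (x : E2) : ℝ := Complex.arg (cplx x)

lemma sphPt_zero (t : ℝ) : sphPt t 0 = Real.cos t := by simp [sphPt]

lemma sphPt_one (t : ℝ) : sphPt t 1 = Real.sin t := by simp [sphPt]

lemma norm_sq_E2 (x : E2) : ‖x‖ ^ 2 = x 0 ^ 2 + x 1 ^ 2 := by
  rw [EuclideanSpace.norm_sq_eq]; simp [Fin.sum_univ_two]

lemma norm_sphPt (t : ℝ) : ‖sphPt t‖ = 1 := by
  have h := norm_sq_E2 (sphPt t)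
  rw [sphPt_zero, sphPt_one, Real.cos_sq_add_sin_sq] at h
  nlinarith [norm_nonneg (sphPt t)]

lemma cplx_ne {x : E2} (hx : x ≠ 0) : cplx x ≠ 0 := by
  intro h
  apply hx
  have h0 := congrArg Complex.re h
  have h1 := congrArg Complex.im h
  simp [cplx] at h0 h1
  ext i; fin_cases i <;> simp [h0, h1]

lemma sphPt_periodic : Function.Periodic sphPt (2 * Real.pi) := by
  intro t; simp [sphPt]

lemma contDiff_sphPt : ContDiff ℝ (⊤ : ℕ∞) sphPt := by
  rw [contDiff_euclidean]
  intro i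
  fin_cases i
  · simpa [sphPt_zero] using Real.contDiff_cos
  · simpa [sphPt_one] using Real.contDiff_sin

lemma contDiff_cplx : ContDiff ℝ (⊤ : ℕ∞) cplx := by
  unfold cplx
  have h : ∀ i : Fin 2, ContDiff ℝ (⊤ : ℕ∞) (fun x : E2 => ((x i : ℝ) : ℂ)) := fun i =>
    Complex.ofRealCLM.contDiff.comp (contDiff_euclidean.1 contDiff_id i)
  exact (h 0).add ((h 1).mul contDiff_const)

lemma periodic_angle {g : ℝ → ℝ} (hg : Function.Periodic g (2 * Real.pi)) {s t : ℝ}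
    (h : (s : Real.Angle) = t) : g s = g t := by
  obtain ⟨k, hk⟩ := Real.Angle.angle_eq_iff_two_pi_dvd_sub.1 h
  have : s = t + k * (2 * Real.pi) := by linarith
  rw [this]; exact hg.int_mul k t

lemma ang_smul (r t : ℝ) (hr : 0 < r) : ((ang (r • sphPt t) : ℝ) : Real.Angle) = t := by
  have h := Complex.arg_mul_cos_add_sin_mul_I_coe_angle hr (t : Real.Angle)
  rw [← h]
  unfold ang
  congr 2
  simp [cplx, sphPt_zero, sphPt_one]
  ring

lemma polar (x : E2) : ‖x‖ • sphPt (ang x) = x := by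
  have hn : ‖cplx x‖ = ‖x‖ := by
    have h1 := norm_sq_E2 x
    have h2 := Complex.sq_norm (cplx x)
    rw [Complex.normSq_apply] at h2
    simp [cplx] at h2
    rw [← abs_of_nonneg (norm_nonneg x), ← abs_of_nonneg (norm_nonneg (cplx x)), ← sq_eq_sq_iff_abs_eq_abs]
    rw [h1]; simp only [cplx]; rw [h2]; ring
  ext i
  fin_cases i
  · have := Complex.norm_mul_cos_arg (cplx x)
    rw [hn] at this
    simpa [sphPt_zero, ang, cplx] using this
  · have := Complex.norm_mul_sin_arg (cplx x)
    rw [hn] at this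
    simpa [sphPt_one, ang, cplx] using this

lemma contDiffAt_arg {z : ℂ} (hz : z ∈ Complex.slitPlane) :
    ContDiffAt ℝ (⊤ : ℕ∞) Complex.arg z := by
  have h := (Complex.contDiffAt_log hz (n := ((⊤ : ℕ∞) : WithTop ℕ∞))).restrict_scalars ℝ
  have h2 := Complex.imCLM.contDiff.contDiffAt.comp z h
  refine h2.congr_of_eventuallyEq (Filter.Eventually.of_forall fun w => ?_)
  simp [Complex.log_im]

lemma contDiffAt_ang {g : ℝ → ℝ} (hs : ContDiff ℝ (⊤ : ℕ∞) g)
    (hg : Function.Periodic g (2 * Real.pi)) {x : E2} (hx : x ≠ 0) :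
    ContDiffAt ℝ (⊤ : ℕ∞) (fun x => g (ang x)) x := by
  by_cases hz : cplx x ∈ Complex.slitPlane
  · exact hs.contDiffAt.comp x ((contDiffAt_arg hz).comp x contDiff_cplx.contDiffAt)
  · have hz' : -cplx x ∈ Complex.slitPlane := by
      have hne := cplx_ne hx
      rw [Complex.mem_slitPlane_iff] at hz ⊢
      push Not at hz
      left
      rcases lt_or_eq_of_le hz.1 with h | h
      · simpa using h
      · exact absurd (Complex.ext h hz.2) hne
    have h1 : ContDiffAt ℝ (⊤ : ℕ∞) (fun x => g (Complex.arg (-cplx x) + Real.pi)) x := by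
      refine hs.contDiffAt.comp x (ContDiffAt.add ?_ contDiffAt_const)
      exact ContDiffAt.comp x (f := fun x => -cplx x) (contDiffAt_arg hz')
        contDiff_cplx.contDiffAt.neg
    refine h1.congr_of_eventuallyEq ?_
    filter_upwards [isOpen_ne.mem_nhds hx] with y hy
    apply periodic_angle hg
    have := Complex.arg_neg_coe_angle (cplx_ne hy)
    rw [Real.Angle.coe_add, this, add_assoc, Real.Angle.coe_pi_add_coe_pi, add_zero]
    rfl

lemma contDiff_radial {k g : ℝ → ℝ} (hk : ContDiff ℝ (⊤ : ℕ∞) k)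
    (hk0 : ∀ r ≤ 1/4, k r = 0) (hs : ContDiff ℝ (⊤ : ℕ∞) g)
    (hg : Function.Periodic g (2 * Real.pi)) :
    ContDiff ℝ (⊤ : ℕ∞) (fun x : E2 => k (‖x‖ ^ 2) * g (ang x)) := by
  rw [contDiff_iff_contDiffAt]
  intro x
  by_cases hx : x = 0
  · subst hx
    refine (contDiffAt_const (c := (0:ℝ))).congr_of_eventuallyEq ?_
    filter_upwards [Metric.ball_mem_nhds (0 : E2) (show (0:ℝ) < 1/2 by norm_num)] with y hy
    rw [hk0, zero_mul]
    have : ‖y‖ < 1/2 := by simpa using hy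
    nlinarith [norm_nonneg y]
  · exact (hk.comp (contDiff_norm_sq ℝ)).contDiffAt.mul (contDiffAt_ang hs hg hx)

/-- Critical point on a polar ray: both polar partial derivatives vanish. -/
lemma polar_deriv {f : E2 → ℝ} {P : ℝ → ℝ → ℝ} (hf : ContDiff ℝ (⊤ : ℕ∞) f)
    (hP : ∀ r t, 0 < r → f (r • sphPt t) = P (r ^ 2) t) {r t a b : ℝ} (hr : 0 < r)
    (ha : HasDerivAt (fun ρ => P ρ t) a (r ^ 2)) (hb : HasDerivAt (fun t => P (r ^ 2) t) b t) :
    fderiv ℝ f (r • sphPt t) (sphPt t) = a * (2 * r) ∧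
      fderiv ℝ f (r • sphPt t) (r • deriv sphPt t) = b := by
  have hd : HasFDerivAt f (fderiv ℝ f (r • sphPt t)) (r • sphPt t) :=
    (hf.differentiable (by simp)).differentiableAt.hasFDerivAt
  constructor
  · have h1 : HasDerivAt (fun s : ℝ => s • sphPt t) (sphPt t) r := by
      simpa using (hasDerivAt_id r).smul_const (sphPt t)
    have h2 := hd.comp_hasDerivAt r h1
    have h3 : HasDerivAt (fun s : ℝ => P (s ^ 2) t) (a * (2 * r)) r := by
      have := HasDerivAt.comp r (h := fun s : ℝ => s ^ 2) ha (hasDerivAt_pow 2 r)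
      simpa [Function.comp_def] using this
    refine h2.unique (h3.congr_of_eventuallyEq ?_)
    filter_upwards [lt_mem_nhds hr] with s hs
    exact hP s t hs
  · have h1 : HasDerivAt (fun s : ℝ => r • sphPt s) (r • deriv sphPt t) t :=
      ((contDiff_sphPt.differentiable (by simp)).differentiableAt.hasDerivAt).const_smul r
    have h2 := hd.comp_hasDerivAt t h1
    refine h2.unique (hb.congr_of_eventuallyEq ?_)
    exact Filter.Eventually.of_forall fun s => hP r s hr

lemma sphPt_inj {s t : ℝ} (hs : s ∈ Set.Ico (0 : ℝ) (2 * Real.pi))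
    (ht : t ∈ Set.Ico (0 : ℝ) (2 * Real.pi)) (h : sphPt s = sphPt t) : s = t := by
  have h0 : Real.cos s = Real.cos t := by rw [← sphPt_zero, ← sphPt_zero, h]
  have h1 : Real.sin s = Real.sin t := by rw [← sphPt_one, ← sphPt_one, h]
  obtain ⟨k, hk⟩ := Real.Angle.angle_eq_iff_two_pi_dvd_sub.1 (Real.Angle.cos_sin_inj h0 h1)
  have hp := Real.pi_pos
  have h2 : (k : ℝ) < 1 := by
    by_contra hc; push Not at hc
    nlinarith [hs.1, hs.2, ht.1, ht.2]
  have h3 : (-1 : ℝ) < k := by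
    by_contra hc; push Not at hc
    nlinarith [hs.1, hs.2, ht.1, ht.2]
  have h4 : k < 1 := by exact_mod_cast h2
  have h5 : -1 < k := by exact_mod_cast h3
  have : k = 0 := by omega
  subst this
  simp at hk; linarith

lemma exists_polar (x : E2) : ∃ t ∈ Set.Ico (0 : ℝ) (2 * Real.pi), x = ‖x‖ • sphPt t := by
  obtain ⟨t, ht, h⟩ := sphPt_periodic.exists_mem_Ico₀ Real.two_pi_pos (ang x)
  exact ⟨t, ht, by rw [← h, polar]⟩

lemma deriv_periodic {g : ℝ → ℝ} (hg : Function.Periodic g (2 * Real.pi)) :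
    Function.Periodic (deriv g) (2 * Real.pi) := by
  intro t
  rw [← deriv_comp_add_const]
  congr 1
  ext s; exact hg s

open scoped Manifold in
lemma exists_B {n : ℕ} (a : Ribbon n) (U : Finset (Fin n)) :
    ∃ B : ℝ → ℝ, ContDiff ℝ (⊤ : ℕ∞) B ∧ Function.Periodic B (2 * Real.pi) ∧
      (∀ t, 0 ≤ B t ∧ B t ≤ 1) ∧ (∀ i ∈ U, B (a.θ i) = 1) ∧ (∀ i ∉ U, B (a.θ i) = 0) ∧
      ∃ Q > 0, ∀ t ∈ Set.Icc (0 : ℝ) (2 * Real.pi), |deriv B t| ≤ Q * |deriv a.g t| := by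
  have hd : Disjoint ((fun i => sphPt (a.θ i)) '' (U : Set (Fin n))ᶜ)
      ((fun i => sphPt (a.θ i)) '' (U : Set (Fin n))) := by
    rw [Set.disjoint_left]
    rintro _ ⟨i, hi, rfl⟩ ⟨j, hj, h⟩
    have := a.theta_mono.injective (sphPt_inj (a.theta_mem j) (a.theta_mem i) h)
    subst this
    exact hi hj
  obtain ⟨b, h0, h1, hb⟩ := exists_contMDiffMap_zero_one_nhds_of_isClosed 𝓘(ℝ, E2)
    (n := (⊤ : ℕ∞))
    (Set.toFinite ((fun i => sphPt (a.θ i)) '' (U : Set (Fin n))ᶜ)).isClosed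
    (Set.toFinite ((fun i => sphPt (a.θ i)) '' (U : Set (Fin n)))).isClosed hd
  have hbs : ContDiff ℝ (⊤ : ℕ∞) (b : E2 → ℝ) := b.contMDiff.contDiff
  have hB : ContDiff ℝ (⊤ : ℕ∞) (fun t => b (sphPt t)) := hbs.comp contDiff_sphPt
  have hnode : ∀ t, deriv a.g t = 0 → ∃ i, sphPt t = sphPt (a.θ i) := by
    intro t ht
    have hper : Function.Periodic (fun t => (deriv a.g t, sphPt t)) (2 * Real.pi) := by
      intro s
      simp only [deriv_periodic a.periodic_g s, sphPt_periodic s]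
    obtain ⟨s, hs, h⟩ := hper.exists_mem_Ico₀ Real.two_pi_pos t
    simp only [Prod.mk.injEq] at h
    obtain ⟨i, hi⟩ := a.crit_only s hs (by rw [← h.1, ht])
    exact ⟨i, by rw [h.2, hi]⟩
  have hloc : ∀ t, deriv a.g t = 0 → ∀ᶠ s in nhds t, deriv (fun t => b (sphPt t)) s = 0 := by
    intro t ht
    obtain ⟨i, hi⟩ := hnode t ht
    have hc : ∃ c : ℝ, ∀ᶠ x in nhds (sphPt t), b x = c := by
      rw [hi]
      by_cases hU : i ∈ U
      · exact ⟨1, (eventually_nhdsSet_iff_forall.1 h1) _ ⟨i, hU, rfl⟩⟩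
      · exact ⟨0, (eventually_nhdsSet_iff_forall.1 h0) _ ⟨i, hU, rfl⟩⟩
    obtain ⟨c, hc⟩ := hc
    have h2 := (contDiff_sphPt.continuous.tendsto t).eventually hc
    filter_upwards [h2.eventually_nhds] with s hs
    have : (fun t => b (sphPt t)) =ᶠ[nhds s] fun _ => c := hs
    rw [this.deriv_eq]; simp
  have hcB : Continuous (deriv (fun t => b (sphPt t))) := hB.continuous_deriv (by simp)
  have hcg : Continuous (deriv a.g) := a.smooth_g.continuous_deriv (by simp)
  have hq : Continuous (fun t => deriv (fun t => b (sphPt t)) t / deriv a.g t) := by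
    rw [continuous_iff_continuousAt]
    intro t
    by_cases ht : deriv a.g t = 0
    · refine (continuousAt_const (y := (0:ℝ))).congr ?_
      filter_upwards [hloc t ht] with s hs
      rw [hs, zero_div]
    · exact hcB.continuousAt.div hcg.continuousAt ht
  obtain ⟨Q, hQ⟩ := (isCompact_Icc (a := (0:ℝ)) (b := 2 * Real.pi)).exists_bound_of_continuousOn
    hq.continuousOn
  refine ⟨fun t => b (sphPt t), hB, fun t => by simp [sphPt_periodic t], fun t => hb _, ?_, ?_,
    max Q 1, by positivity, ?_⟩
  · intro i hi
    exact h1.self_of_nhdsSet _ ⟨i, hi, rfl⟩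
  · intro i hi
    exact h0.self_of_nhdsSet _ ⟨i, hi, rfl⟩
  · intro t ht
    by_cases hg : deriv a.g t = 0
    · rw [(hloc t hg).self_of_nhds]; simp [hg]
    · have := hQ t ht
      rw [Real.norm_eq_abs, abs_div, div_le_iff₀ (abs_pos.2 hg)] at this
      exact this.trans (by gcongr; exact le_max_left _ _)

def chi (ρ : ℝ) : ℝ := Real.smoothTransition (4 * ρ - 1)

lemma contDiff_chi : ContDiff ℝ (⊤ : ℕ∞) chi := by
  unfold chi
  exact Real.smoothTransition.contDiff.comp (by fun_prop)

lemma chi_zero {ρ : ℝ} (h : ρ ≤ 1/4) : chi ρ = 0 :=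
  Real.smoothTransition.zero_of_nonpos (by linarith)

lemma chi_one {ρ : ℝ} (h : 1/2 ≤ ρ) : chi ρ = 1 :=
  Real.smoothTransition.one_of_one_le (by linarith)

lemma chi_deriv_one {ρ : ℝ} (h : 1/2 ≤ ρ) : deriv chi ρ = 0 := by
  have hc : Continuous (deriv chi) := contDiff_chi.continuous_deriv (by simp)
  have hcl : IsClosed {x | deriv chi x = 0} := isClosed_eq hc continuous_const
  have hsub : Set.Ioi (1/2 : ℝ) ⊆ {x | deriv chi x = 0} := by
    intro x hx
    have : chi =ᶠ[nhds x] fun _ => 1 := by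
      filter_upwards [lt_mem_nhds hx] with y hy
      exact chi_one hy.le
    simp [this.deriv_eq]
  have := hcl.closure_subset_iff.2 hsub
  rw [closure_Ioi] at this
  exact this h

lemma chi_bd (ρ : ℝ) : 0 ≤ chi ρ ∧ chi ρ ≤ 1 :=
  ⟨Real.smoothTransition.nonneg _, Real.smoothTransition.le_one _⟩

lemma inner_region {c C K G M' g B X Y w R : ℝ} (hC : |C| = c) (hc : 0 < c)
    (hX : |X| ≤ K) (hg : |g| ≤ G) (hKG : 4 * (K * G) ≤ c) (hK : 8 * K ≤ M') (hM : 0 < M')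
    (hB0 : 0 ≤ B) (hB1 : B ≤ 1) (hY0 : 0 ≤ Y) (hY1 : Y ≤ 1)
    (hw : |w| ≤ 2 * c / M') (hR0 : 0 ≤ R) (hR : R ≤ 1/8) :
    X * g + (X * w + Y * (-(2 * C * R))) * B + C ≠ 0 := by
  intro h
  have hK0 : 0 ≤ K := (abs_nonneg X).trans hX
  have h1 : |X * g| ≤ c / 4 := by
    rw [abs_mul]
    have : |X| * |g| ≤ K * G := mul_le_mul hX hg (abs_nonneg _) hK0
    linarith
  have h2 : |X * w * B| ≤ c / 4 := by
    rw [abs_mul, abs_mul, abs_of_nonneg hB0]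
    have e1 : |X| * |w| ≤ K * (2 * c / M') := mul_le_mul hX hw (abs_nonneg _) hK0
    have e2 : K * (2 * c / M') ≤ c / 4 := by
      rw [mul_div_assoc', div_le_iff₀ hM]
      nlinarith
    have e3 : |X| * |w| * B ≤ |X| * |w| * 1 := by gcongr
    linarith
  have h3 : |Y * (-(2 * C * R)) * B| ≤ c / 4 := by
    rw [abs_mul, abs_mul, abs_neg, abs_mul, abs_mul, hC, abs_of_nonneg hB0, abs_of_nonneg hY0,
      abs_of_nonneg hR0]
    have e1 : Y * (|2| * c * R) * B ≤ 1 * (|2| * c * (1/8)) * 1 := by gcongr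
    rw [abs_of_pos (by norm_num : (0:ℝ) < 2)] at e1 ⊢
    linarith
  have h4 : C = -(X * g) - X * w * B - Y * (-(2 * C * R)) * B := by linarith
  rw [abs_le] at h1 h2 h3
  have h5 : |C| ≤ 3 * c / 4 := by
    rw [abs_le]
    constructor <;> linarith
  linarith

lemma exists_ext {n : ℕ} (a : Ribbon n) (τ : ℝ) (hτ : |τ| = 1) (U : Finset (Fin n)) :
    ∃ f : E2 → ℝ, ContDiff ℝ (⊤ : ℕ∞) f ∧ (∀ t, f (sphPt t) = a.g t) ∧
      (∀ x ∈ Metric.sphere (0 : E2) 1, fderiv ℝ f x ≠ 0) ∧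
      (∃ c > 0, ∀ i, fderiv ℝ f (sphPt (a.θ i)) (sphPt (a.θ i)) =
        if i ∈ U then -(τ * c) else τ * c) ∧
      (critPts f).encard ≤ (U.card + 1 : ℕ) := by
  obtain ⟨B, hB, hBp, hB01, hBU, hBU', Q, hQ, hBQ⟩ := exists_B a U
  have hchi' : Continuous (deriv chi) := contDiff_chi.continuous_deriv (by simp)
  obtain ⟨K, hK⟩ := (isCompact_Icc (a := (0:ℝ)) (b := 1)).exists_bound_of_continuousOn
    hchi'.continuousOn
  obtain ⟨G, hG⟩ := (isCompact_Icc (a := (0:ℝ)) (b := 2 * Real.pi)).exists_bound_of_continuousOn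
    a.smooth_g.continuous.continuousOn
  have hK0 : 0 ≤ K := (norm_nonneg _).trans (hK 0 (by simp))
  have hG0 : 0 ≤ G := (norm_nonneg _).trans (hG 0 (by simp [Real.pi_pos.le]))
  obtain ⟨c, hc, hcK⟩ : ∃ c : ℝ, 0 < c ∧ 4 * (K * G) ≤ c := ⟨4 * (K * G) + 1, by positivity, by linarith⟩
  obtain ⟨M, hM⟩ := exists_nat_gt (3 + 8 * K + 2 * c * Q)
  have hcQ : 0 < c * Q := by positivity
  have hM3 : 3 ≤ M := by
    have : (3:ℝ) < M := by linarith
    exact_mod_cast this.le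
  have hM1 : (0:ℝ) < (M:ℝ) + 1 := by positivity
  obtain ⟨C, hCdef⟩ : ∃ C : ℝ, C = τ * c := ⟨_, rfl⟩
  have hC : |C| = c := by rw [hCdef, abs_mul, hτ, one_mul, abs_of_pos hc]
  have hC0 : C ≠ 0 := by intro h; rw [h] at hC; simp at hC; linarith
  let w : ℝ → ℝ := fun ρ => 2 * C / (M + 1) * (1 - ρ ^ (M + 1))
  have hw : ContDiff ℝ (⊤ : ℕ∞) w := by
    unfold w; fun_prop
  have hw' : ∀ ρ, HasDerivAt w (-(2 * C * ρ ^ M)) ρ := by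
    intro ρ
    have := ((hasDerivAt_pow (M + 1) ρ).const_sub 1).const_mul (2 * C / ((M:ℝ) + 1))
    convert! this using 1
    push_cast
    field_simp
  have hwb : ∀ ρ, 0 ≤ ρ → ρ ≤ 1 → |w ρ| ≤ 2 * c / (M + 1) := by
    intro ρ h0 h1
    have e1 : ρ ^ (M + 1) ≤ 1 := pow_le_one₀ h0 h1
    have e2 : 0 ≤ ρ ^ (M + 1) := by positivity
    simp only [w]
    rw [abs_mul, abs_div, abs_mul, hC, abs_of_pos hM1, abs_of_pos (by norm_num : (0:ℝ) < 2)]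
    have e3 : |1 - ρ ^ (M + 1)| ≤ 1 := by rw [abs_le]; constructor <;> linarith
    exact mul_le_of_le_one_right (by positivity) e3
  let P : ℝ → ℝ → ℝ := fun ρ t => chi ρ * a.g t + chi ρ * w ρ * B t + C * (ρ - 1)
  let f : E2 → ℝ := fun x => chi (‖x‖ ^ 2) * a.g (ang x) + chi (‖x‖ ^ 2) * w (‖x‖ ^ 2) * B (ang x)
    + C * (‖x‖ ^ 2 - 1)
  have hf : ContDiff ℝ (⊤ : ℕ∞) f := by
    refine ((contDiff_radial contDiff_chi (fun r h => chi_zero h) a.smooth_g a.periodic_g).add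
      (contDiff_radial (k := fun ρ => chi ρ * w ρ) (contDiff_chi.mul hw)
        (fun r h => by simp [chi_zero h]) hB hBp)).add ?_
    exact contDiff_const.mul ((contDiff_norm_sq ℝ).sub contDiff_const)
  have hP : ∀ r t, 0 < r → f (r • sphPt t) = P (r ^ 2) t := by
    intro r t hr
    have h1 : ‖r • sphPt t‖ = r := by rw [norm_smul, norm_sphPt, mul_one, Real.norm_of_nonneg hr.le]
    simp only [f, P, h1, periodic_angle a.periodic_g (ang_smul r t hr),
      periodic_angle hBp (ang_smul r t hr)]
  have hρ : ∀ ρ t, HasDerivAt (fun ρ => P ρ t)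
      (deriv chi ρ * a.g t + (deriv chi ρ * w ρ + chi ρ * (-(2 * C * ρ ^ M))) * B t + C) ρ := by
    intro ρ t
    have hch : HasDerivAt chi (deriv chi ρ) ρ :=
      (contDiff_chi.differentiable (by simp)).differentiableAt.hasDerivAt
    have := ((hch.mul_const (a.g t)).add ((hch.mul (hw' ρ)).mul_const (B t))).add
      (((hasDerivAt_id ρ).sub_const 1).const_mul C)
    convert! this using 1
    simp
  have ht : ∀ ρ t, HasDerivAt (fun t => P ρ t)
      (chi ρ * deriv a.g t + chi ρ * w ρ * deriv B t) t := by
    intro ρ t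
    have hg : HasDerivAt a.g (deriv a.g t) t :=
      (a.smooth_g.differentiable (by simp)).differentiableAt.hasDerivAt
    have hb : HasDerivAt B (deriv B t) t :=
      (hB.differentiable (by simp)).differentiableAt.hasDerivAt
    exact ((hg.const_mul (chi ρ)).add (hb.const_mul (chi ρ * w ρ))).add_const _
  have key := fun (r t : ℝ) (hr : 0 < r) => polar_deriv hf hP hr (hρ (r ^ 2) t) (ht (r ^ 2) t)
  -- critical points outside the origin
  have crit : ∀ r t : ℝ, 0 < r → r ≤ 1 → t ∈ Set.Ico (0:ℝ) (2 * Real.pi) →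
      fderiv ℝ f (r • sphPt t) = 0 → ∃ i ∈ U, t = a.θ i ∧ (r ^ 2) ^ M = 1 / 2 := by
    intro r t hr hr1 htm hz
    obtain ⟨k1, k2⟩ := key r t hr
    rw [hz] at k1 k2
    simp only [ContinuousLinearMap.zero_apply] at k1 k2
    have hr2 : 0 < r ^ 2 := by positivity
    have hr21 : r ^ 2 ≤ 1 := pow_le_one₀ hr.le hr1
    have k1' := (mul_eq_zero.1 k1.symm).resolve_right (by positivity)
    rcases le_total (r ^ 2) (1/2) with hh | hh
    · exfalso
      refine inner_region (M' := (M:ℝ) + 1) hC hc (hK (r ^ 2) ⟨hr2.le, hr21⟩)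
        (hG t (Set.Ico_subset_Icc_self htm)) hcK (by linarith) hM1 (hB01 t).1 (hB01 t).2
        (chi_bd _).1 (chi_bd _).2 (hwb _ hr2.le hr21) (by positivity) ?_ k1'
      calc (r ^ 2) ^ M ≤ (1/2) ^ M := by gcongr
        _ ≤ (1/2) ^ 3 := pow_le_pow_of_le_one (by norm_num) (by norm_num) hM3
        _ = 1/8 := by norm_num
    · rw [chi_one hh, chi_deriv_one hh] at k1'
      rw [chi_one hh] at k2
      have hg0 : deriv a.g t = 0 := by
        by_contra hne
        have hpos : 0 < |deriv a.g t| := abs_pos.2 hne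
        have e1 : |deriv a.g t| = |w (r ^ 2)| * |deriv B t| := by
          rw [← abs_mul, ← abs_neg (_ * _)]; congr 1; linarith
        have e2 : |w (r ^ 2)| * |deriv B t| ≤ (2 * c / (M + 1)) * (Q * |deriv a.g t|) :=
          mul_le_mul (hwb _ hr2.le hr21) (hBQ t (Set.Ico_subset_Icc_self htm)) (abs_nonneg _)
            (by positivity)
        have e3 : 2 * c / (M + 1) * Q < 1 := by
          rw [div_mul_eq_mul_div, div_lt_one hM1]; linarith
        nlinarith
      obtain ⟨i, hi⟩ := a.crit_only t htm hg0
      by_cases hiU : i ∈ U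
      · refine ⟨i, hiU, hi, ?_⟩
        rw [hi, hBU i hiU] at k1'
        have : C * (1 - 2 * (r ^ 2) ^ M) = 0 := by linarith
        have := (mul_eq_zero.1 this).resolve_left hC0
        linarith
      · exfalso
        rw [hi, hBU' i hiU] at k1'
        apply hC0; linarith
  refine ⟨f, hf, ?_, ?_, ⟨2 * c, by positivity, ?_⟩, ?_⟩
  · intro t
    have := hP 1 t one_pos
    rw [one_smul] at this
    rw [this]
    simp [P, w, chi_one (show (1/2:ℝ) ≤ 1 by norm_num)]
  · intro x hx hz
    have hx1 : ‖x‖ = 1 := by simpa using hx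
    obtain ⟨t, htm, hxt⟩ := exists_polar x
    rw [hx1] at hxt
    rw [hxt] at hz
    obtain ⟨i, -, -, h⟩ := crit 1 t one_pos le_rfl htm hz
    norm_num at h
  · intro i
    have h := (key 1 (a.θ i) one_pos).1
    rw [one_smul] at h
    rw [h]
    have e1 := chi_one (show (1/2:ℝ) ≤ 1 by norm_num)
    have e2 := chi_deriv_one (show (1/2:ℝ) ≤ 1 by norm_num)
    split_ifs with hi
    · simp [e1, e2, hBU i hi, hCdef]; ring
    · simp [e1, e2, hBU' i hi, hCdef]; ring
  · obtain ⟨r0, hr0⟩ : ∃ r0 : ℝ, ∀ r, 0 < r → (r ^ 2) ^ M = 1/2 → r = r0 := by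
      by_cases hex : ∃ r : ℝ, 0 < r ∧ (r ^ 2) ^ M = 1/2
      · obtain ⟨r0, h0, h1⟩ := hex
        refine ⟨r0, fun r hr h => ?_⟩
        rw [← pow_mul] at h h1
        exact (pow_left_inj₀ hr.le h0.le (by omega)).1 (h.trans h1.symm)
      · exact ⟨0, fun r hr h => (hex ⟨r, hr, h⟩).elim⟩
    have hsub : critPts f ⊆ ((insert 0 (U.image fun i => r0 • sphPt (a.θ i)) : Finset E2) : Set E2) := by
      rintro x ⟨hx, hz⟩
      have hx1 : ‖x‖ < 1 := by simpa using hx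
      by_cases hx0 : x = 0
      · simp [hx0]
      obtain ⟨t, htm, hxt⟩ := exists_polar x
      have hpos := norm_pos_iff.2 hx0
      rw [hxt] at hz
      obtain ⟨i, hi, hti, h⟩ := crit ‖x‖ t hpos hx1.le htm hz
      have := hr0 _ hpos h
      simp only [Finset.coe_insert, Finset.coe_image, Set.mem_insert_iff, Set.mem_image]
      right
      exact ⟨i, hi, by rw [← hti, ← this, ← hxt]⟩
    refine (Set.encard_le_encard hsub).trans ?_
    rw [Set.encard_coe_eq_coe_finsetCard]
    have := (Finset.card_insert_le (0:E2) (U.image fun i => r0 • sphPt (a.θ i)))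
    have h2 := Finset.card_image_le (s := U) (f := fun i => r0 • sphPt (a.θ i))
    exact_mod_cast this.trans (by omega)

lemma exists_good {n : ℕ} (a : Ribbon n) :
    ∃ f : E2 → ℝ, IsExtension a f ∧ (critPts f).encard ≤ ((n / 2 + 1 : ℕ) : ℕ∞) := by
  classical
  -- wanted sign of the radial derivative at each node
  let d : Fin n → Prop := fun i => (a.ν i = 1 ↔ deriv (deriv a.g) (a.θ i) < 0)
  have fin : ∀ (τ : ℝ) (U : Finset (Fin n)), |τ| = 1 → U.card ≤ n / 2 →
      (∀ i, d i → 0 < if i ∈ U then -τ else τ) → (∀ i, ¬ d i → (if i ∈ U then -τ else τ) < 0) →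
      ∃ f : E2 → ℝ, IsExtension a f ∧ (critPts f).encard ≤ ((n / 2 + 1 : ℕ) : ℕ∞) := by
    intro τ U hτ hU hp hn
    obtain ⟨f, hf, hfg, hs, ⟨c, hc, hr⟩, hcard⟩ := exists_ext a τ hτ U
    refine ⟨f, ⟨hf, hfg, hs, fun i => ?_⟩, hcard.trans (by exact_mod_cast Nat.succ_le_succ hU)⟩
    have hr' : ⟪gradient f (sphPt (a.θ i)), sphPt (a.θ i)⟫ = (if i ∈ U then -τ else τ) * c := by
      rw [inner_gradient_left, hr]; split_ifs <;> ring
    rw [hr']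
    have hp' := hp i
    have hn' := hn i
    generalize (if i ∈ U then -τ else τ) = s at hp' hn'
    rcases a.nu_sign i with h | h
    · refine ⟨fun h2 => ?_, fun h2 => ?_⟩
      · have := mul_pos (hp' ⟨fun _ => h2, fun _ => h⟩) hc
        rw [h]; push_cast; linarith
      · have := mul_neg_of_neg_of_pos (hn' fun hd => absurd (hd.1 h) (not_lt.2 h2.le)) hc
        rw [h]; push_cast; linarith
    · have h1 : a.ν i ≠ 1 := by rw [h]; decide
      refine ⟨fun h2 => ?_, fun h2 => ?_⟩
      · have := mul_neg_of_neg_of_pos (hn' fun hd => h1 (hd.2 h2)) hc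
        rw [h]; push_cast; linarith
      · have := mul_pos (hp' ⟨fun h3 => absurd h3 h1, fun h3 => absurd h3 (not_lt.2 h2.le)⟩) hc
        rw [h]; push_cast; linarith
  have hcard := Finset.card_filter_add_card_filter_not (s := (Finset.univ : Finset (Fin n))) d
  rw [Finset.card_univ, Fintype.card_fin] at hcard
  by_cases hle : (Finset.univ.filter fun i => ¬ d i).card ≤ n / 2
  · refine fin 1 _ (by simp) hle ?_ ?_
    · intro i hi; simp [hi]
    · intro i hi; simp [hi]
  · refine fin (-1) (Finset.univ.filter d) (by simp) (by omega) ?_ ?_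
    · intro i hi; simp [hi]
    · intro i hi; simp [hi]

/-- For every ribbon `a` with `n` nodes there exists an extension of `a` having at most
`n/2 + 1` critical points in the open unit disk; that is, `γ(a) ≤ n/2 + 1`. -/
theorem stmt_1 (n : ℕ) (a : Ribbon n) :
    (∃ f : E2 → ℝ, IsExtension a f ∧ (critPts f).encard ≤ ((n / 2 + 1 : ℕ) : ℕ∞)) ∧
    gammaR a ≤ ((n / 2 + 1 : ℕ) : ℕ∞) := by
  obtain ⟨f, hf, hc⟩ := exists_good a
  exact ⟨⟨f, hf, hc⟩, le_trans (sInf_le (show (critPts f).encard ∈ {k : ℕ∞ | ∃ f : E2 → ℝ, IsExtension a f ∧ (critPts f).encard = k} from ⟨f, hf, rfl⟩)) hc⟩
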